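/- Let ρ be a rank function on a skeletally small triangulated category C. Then Ker ρ = {f : ρ(f)=0} is a Σ-closed additive ideal of C; moreover, it is a cohomological ideal, since Ker ρ equals the annihilator of the cohomological functor given by composing the Yoneda embedding C → mod C with the Serre localisation of mod C at Ker ρ̃. -/

import Mathlib

/-!
Statement 12: For a rank function `ρ` on a skeletally small triangulated category `C`, the
kernel on morphisms `Ker ρ = {f : ρ(f) = 0}` is a Σ-closed additive ideal of `C`, and it is
a cohomological ideal: it is the annihilator of a cohomological functor from `C` to an
abelian category (namely the composite of the Yoneda embedding into `mod C` with the Serre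
localisation of `mod C` at `Ker ρ̃`).
-/

open CategoryTheory CategoryTheory.Limits CategoryTheory.Pretriangulated

universe v u

variable (C : Type u) [Category.{v} C] [Preadditive C] [HasZeroObject C] [HasShift C ℤ]
  [∀ n : ℤ, (shiftFunctor C n).Additive] [Pretriangulated C] [HasBinaryBiproducts C]
  [EssentiallySmall.{v} C]

/-- A rank function on a triangulated category. -/
structure RankFunction where
  rank : ∀ ⦃X Y : C⦄, (X ⟶ Y) → ℝ
  nonneg : ∀ ⦃X Y : C⦄ (f : X ⟶ Y), 0 ≤ rank f
  additive : ∀ ⦃X₁ Y₁ X₂ Y₂ : C⦄ (f : X₁ ⟶ Y₁) (g : X₂ ⟶ Y₂),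
    rank (biprod.map f g) = rank f + rank g
  rankNullity : ∀ (T : Triangle C), (T ∈ distTriang C) →
    rank T.mor₁ + rank T.mor₂ = rank (𝟙 T.obj₂)
  shiftInv : ∀ ⦃X Y : C⦄ (f : X ⟶ Y),
    rank ((shiftFunctor C (1 : ℤ)).map f) = rank f

/-- A cohomological functor from `C` to some abelian category: it sends distinguished
triangles to exact sequences. -/
structure CohomFunctorTo where
  A : Type (max u (v + 1))
  [cat : Category.{max u v} A]
  [ab : Abelian A]
  H : C ⥤ A
  cohomological : ∀ (T : Triangle C), (T ∈ distTriang C) →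
    ∃ w : H.map T.mor₁ ≫ H.map T.mor₂ = 0, (ShortComplex.mk _ _ w).Exact

attribute [instance] CohomFunctorTo.cat CohomFunctorTo.ab

variable {C}

/-!
Think of `ρ f` as the length of the image of `Hom(-, f)`. Writing the composite `X ⟶ Y ⟶ V` of `f`
with the cone `c` of `k : K ⟶ Y` as the start of a triangle on a third object `N`, there is an
exact sequence `X ⊞ K ⟶ Y ⟶ N ⟶ (X ⊞ K)⟦1⟧ ⟶ Y⟦1⟧`. Rank-nullity and shift invariance along it
give the identity `ρ (f, k) = ρ k + ρ (f ≫ c)`, from which `ρ` decreases under composition on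
either side, so that its kernel is an ideal.

A morphism `e : W ⟶ X` with `ρ e = ρ (𝟙 X)` is one for which the cokernel of `Hom(-, e)` lies in
`Ker ρ̃`. The sieves containing such a morphism form a Grothendieck topology, and sheafification
plays the role of the Serre localisation at `Ker ρ̃`, carried out on all presheaves of abelian
groups instead of the finitely presented ones. A morphism `f` dies after Yoneda and sheafification
iff it is locally zero, i.e. `e ≫ f = 0` for some such `e`, and this holds iff `ρ f = 0`: take for
`e` the fibre of `f`.
-/

section WeakKernel

variable {D : Type*} [Category* D]

/-- `a` is a weak kernel of `b`: the property that the kernel fork `KernelFork.ofι a w` is a weak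
limit, without a chosen lift. Equivalently, `Hom(-, a)` and `Hom(-, b)` form an exact sequence. -/
structure IsWeakKernel [HasZeroMorphisms D] {X Y Z : D} (a : X ⟶ Y) (b : Y ⟶ Z) : Prop where
  w : a ≫ b = 0
  exists_lift : ∀ ⦃E : D⦄ (u : E ⟶ Y), u ≫ b = 0 → ∃ v, u = v ≫ a

namespace IsWeakKernel

variable [Preadditive D] [HasBinaryBiproducts D] {K X Y V N X' K' : D}
  {k : K ⟶ Y} {c : Y ⟶ V} {q : V ⟶ N} {r : N ⟶ X'} {t : N ⟶ K'}

lemma desc_comp {f : X ⟶ Y} (hk : IsWeakKernel k c) (hf : IsWeakKernel (f ≫ c) q) :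
    IsWeakKernel (biprod.desc f k) (c ≫ q) where
  w := by
    ext
    · simpa using hf.w
    · simp [reassoc_of% hk.w]
  exists_lift E u hu := by
    obtain ⟨x, hx⟩ := hf.exists_lift (u ≫ c) (by simpa using hu)
    obtain ⟨y, hy⟩ := hk.exists_lift (u - x ≫ f) (by simp [hx])
    exact ⟨biprod.lift x y, by simp [← hy]⟩

lemma comp_lift (hc : IsWeakKernel c (q ≫ t)) (hq : IsWeakKernel q r) :
    IsWeakKernel (c ≫ q) (biprod.lift r t) where
  w := by
    ext
    · simp [hq.w]
    · simpa using hc.w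
  exists_lift E u hu := by
    obtain ⟨v, rfl⟩ := hq.exists_lift u (by simpa using hu =≫ biprod.fst)
    obtain ⟨y, rfl⟩ := hc.exists_lift v (by simpa using hu =≫ biprod.snd)
    exact ⟨y, by simp⟩

lemma lift_desc {Y' V' : D} {f' : X' ⟶ Y'} {k' : K' ⟶ Y'} {c' : Y' ⟶ V'}
    (w : r ≫ f' + t ≫ k' = 0) (hqr : q ≫ r = 0) (hkc : k' ≫ c' = 0)
    (hr : IsWeakKernel r (f' ≫ c')) (ht : IsWeakKernel (q ≫ t) k') :
    IsWeakKernel (biprod.lift r t) (biprod.desc f' k') where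
  w := by rw [biprod.lift_desc, w]
  exists_lift E u hu := by
    obtain ⟨x, y, rfl⟩ : ∃ x y, u = biprod.lift x y :=
      ⟨u ≫ biprod.fst, u ≫ biprod.snd, by ext <;> simp⟩
    rw [biprod.lift_desc] at hu
    obtain ⟨n, rfl⟩ := hr.exists_lift x (by simpa [hkc] using hu =≫ c')
    have hn : n ≫ r ≫ f' + n ≫ t ≫ k' = 0 := by rw [← Preadditive.comp_add, w, comp_zero]
    obtain ⟨v, hv⟩ := ht.exists_lift (n ≫ t - y) (by
      rw [Preadditive.sub_comp, Category.assoc, sub_eq_zero]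
      rw [Category.assoc] at hu
      exact add_left_cancel (hn.trans hu.symm))
    refine ⟨n - v ≫ q, ?_⟩
    ext
    · simp [hqr]
    · simp [← hv]

end IsWeakKernel

end WeakKernel

section DistinguishedTriangle

variable {D : Type*} [Category* D] [Preadditive D] [HasZeroObject D] [HasShift D ℤ]
  [∀ n : ℤ, (shiftFunctor D n).Additive] [Pretriangulated D]
  {X Y Z : D} {f : X ⟶ Y} {g : Y ⟶ Z} {h : Z ⟶ X⟦(1 : ℤ)⟧}

lemma isWeakKernel_mor₁_mor₂ (hT : Triangle.mk f g h ∈ distTriang D) : IsWeakKernel f g where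
  w := comp_distTriang_mor_zero₁₂ _ hT
  exists_lift _ := Triangle.coyoneda_exact₂ _ hT

lemma isWeakKernel_mor₂_mor₃ (hT : Triangle.mk f g h ∈ distTriang D) : IsWeakKernel g h :=
  isWeakKernel_mor₁_mor₂ (rot_of_distTriang _ hT)

lemma isWeakKernel_mor₃_shift_mor₁ (hT : Triangle.mk f g h ∈ distTriang D) :
    IsWeakKernel h (f⟦(1 : ℤ)⟧') where
  w := comp_distTriang_mor_zero₃₁ _ hT
  exists_lift _ := Triangle.coyoneda_exact₁ _ hT

lemma distinguished_of_iso₁₂ (hT : Triangle.mk f g h ∈ distTriang D) {X' Y' : D} (i : X' ≅ X)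
    (j : Y' ≅ Y) {f' : X' ⟶ Y'} {g' : Y' ⟶ Z} {h' : Z ⟶ X'⟦(1 : ℤ)⟧}
    (hf : f' ≫ j.hom = i.hom ≫ f) (hg : g' = j.hom ≫ g) (hh : h' ≫ i.hom⟦(1 : ℤ)⟧' = h) :
    Triangle.mk f' g' h' ∈ distTriang D :=
  isomorphic_distinguished _ hT _ (Triangle.isoMk _ _ i j (Iso.refl Z) hf
    ((Category.comp_id g').trans hg) (hh.trans (Category.id_comp h).symm))

end DistinguishedTriangle

namespace RankFunction

open scoped ZeroObject

section Rank

variable {D : Type u} [Category.{v} D] [Preadditive D] [HasZeroObject D] [HasShift D ℤ]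
  [∀ n : ℤ, (shiftFunctor D n).Additive] [Pretriangulated D] [HasBinaryBiproducts D]
  (ρ : RankFunction D)

section Triangle

variable {X Y Z : D} {f : X ⟶ Y} {g : Y ⟶ Z} {h : Z ⟶ X⟦(1 : ℤ)⟧}

lemma rank_mor₁_add_rank_mor₂ (hT : Triangle.mk f g h ∈ distTriang D) :
    ρ.rank f + ρ.rank g = ρ.rank (𝟙 Y) :=
  ρ.rankNullity _ hT

lemma rank_mor₂_add_rank_mor₃ (hT : Triangle.mk f g h ∈ distTriang D) :
    ρ.rank g + ρ.rank h = ρ.rank (𝟙 Z) :=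
  ρ.rankNullity _ (rot_of_distTriang _ hT)

end Triangle

lemma rank_id_shift (X : D) : ρ.rank (𝟙 (X⟦(1 : ℤ)⟧)) = ρ.rank (𝟙 X) := by
  rw [← ρ.shiftInv (𝟙 X), CategoryTheory.Functor.map_id]

lemma rank_iso_comp {X' X Y : D} (i : X' ≅ X) (f : X ⟶ Y) : ρ.rank (i.hom ≫ f) = ρ.rank f := by
  obtain ⟨Z, g, h, hT⟩ := distinguished_cocone_triangle f
  have := ρ.rank_mor₁_add_rank_mor₂ hT
  have hT' : Triangle.mk (i.hom ≫ f) g (h ≫ i.inv⟦(1 : ℤ)⟧') ∈ distTriang D :=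
    distinguished_of_iso₁₂ hT i (Iso.refl Y) (by simp) (by simp)
      (by simp [← CategoryTheory.Functor.map_comp])
  have := ρ.rank_mor₁_add_rank_mor₂ hT'
  linarith

lemma rank_neg {X Y : D} (f : X ⟶ Y) : ρ.rank (-f) = ρ.rank f := by
  simpa using ρ.rank_iso_comp (-Iso.refl X) f

lemma rank_mor₃_add_rank_mor₁ {X Y Z : D} {f : X ⟶ Y} {g : Y ⟶ Z} {h : Z ⟶ X⟦(1 : ℤ)⟧}
    (hT : Triangle.mk f g h ∈ distTriang D) : ρ.rank h + ρ.rank f = ρ.rank (𝟙 X) := by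
  have h := ρ.rank_mor₂_add_rank_mor₃ (rot_of_distTriang _ hT)
  rwa [rank_neg, ρ.shiftInv, rank_id_shift] at h

lemma rank_comp_iso {X Y Y' : D} (f : X ⟶ Y) (j : Y ≅ Y') : ρ.rank (f ≫ j.hom) = ρ.rank f := by
  obtain ⟨Z, g, h, hT⟩ := distinguished_cocone_triangle f
  have := ρ.rank_mor₃_add_rank_mor₁ hT
  have hT' : Triangle.mk (f ≫ j.hom) (j.inv ≫ g) h ∈ distTriang D :=
    distinguished_of_iso₁₂ hT (Iso.refl X) j.symm (by simp) (by simp) (by simp)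
  have := ρ.rank_mor₃_add_rank_mor₁ hT'
  linarith

lemma rank_zero_to_zero (X : D) : ρ.rank (0 : X ⟶ 0) = 0 := by
  have := ρ.rank_mor₁_add_rank_mor₂ (contractible_distinguished X)
  linarith

lemma rank_desc_zero {X X' Y : D} (f : X ⟶ Y) :
    ρ.rank (biprod.desc f (0 : X' ⟶ Y)) = ρ.rank f := by
  have hf : biprod.desc f 0 = biprod.map f (0 : X' ⟶ 0) ≫ (isoBiprodZero (isZero_zero D)).inv := by
    ext <;> simp
  rw [hf, ← Iso.symm_hom, ρ.rank_comp_iso, ρ.additive, ρ.rank_zero_to_zero, add_zero]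

lemma rank_desc_comp_self {X X' Y : D} (f : X ⟶ Y) (s : X' ⟶ X) :
    ρ.rank (biprod.desc f (s ≫ f)) = ρ.rank f := by
  let shear : X ⊞ X' ≅ X ⊞ X' :=
    { hom := 𝟙 _ + biprod.snd ≫ s ≫ biprod.inl
      inv := 𝟙 _ - biprod.snd ≫ s ≫ biprod.inl
      hom_inv_id := by simp
      inv_hom_id := by simp }
  have hf : biprod.desc f (s ≫ f) = shear.hom ≫ biprod.desc f 0 := by ext <;> simp [shear]
  rw [hf, ρ.rank_iso_comp, ρ.rank_desc_zero]

lemma rank_desc_swap {X X' Y : D} (f : X ⟶ Y) (f' : X' ⟶ Y) :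
    ρ.rank (biprod.desc f f') = ρ.rank (biprod.desc f' f) := by
  have hf : biprod.desc f f' = (biprod.braiding X X').hom ≫ biprod.desc f' f := by ext <;> simp
  rw [hf, ρ.rank_iso_comp]

lemma rank_eq_of_factors {X X' Y : D} {f : X ⟶ Y} {f' : X' ⟶ Y} {s : X ⟶ X'} {s' : X' ⟶ X}
    (hf : f = s ≫ f') (hf' : f' = s' ≫ f) : ρ.rank f = ρ.rank f' := by
  rw [← ρ.rank_desc_comp_self f s', ← hf', rank_desc_swap, hf, ρ.rank_desc_comp_self]

lemma rank_add_of_isWeakKernel {X Y Z : D} {a : X ⟶ Y} {b : Y ⟶ Z} (hab : IsWeakKernel a b) :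
    ρ.rank a + ρ.rank b = ρ.rank (𝟙 Y) := by
  obtain ⟨F, i, h, hT⟩ := distinguished_cocone_triangle₁ b
  have hi := isWeakKernel_mor₁_mor₂ hT
  obtain ⟨s, hs⟩ := hi.exists_lift a hab.w
  obtain ⟨s', hs'⟩ := hab.exists_lift i hi.w
  rw [ρ.rank_eq_of_factors hs hs', ρ.rank_mor₁_add_rank_mor₂ hT]

lemma rank_id_biprod (X Y : D) : ρ.rank (𝟙 (X ⊞ Y)) = ρ.rank (𝟙 X) + ρ.rank (𝟙 Y) := by
  rw [← ρ.additive]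
  congr 1
  ext <;> simp

lemma rank_desc_shift {X X' Y : D} (f : X ⟶ Y) (f' : X' ⟶ Y) :
    ρ.rank (biprod.desc (f⟦(1 : ℤ)⟧') (f'⟦(1 : ℤ)⟧')) = ρ.rank (biprod.desc f f') := by
  have := preservesBinaryBiproduct_of_preservesBiproduct (shiftFunctor D (1 : ℤ)) X X'
  rw [← ρ.shiftInv (biprod.desc f f'), ← biprod.mapBiprod_hom_desc, ρ.rank_iso_comp]

lemma rank_desc_eq_add {K X Y V : D} {k : K ⟶ Y} {c : Y ⟶ V} {d : V ⟶ K⟦(1 : ℤ)⟧}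
    (hT : Triangle.mk k c d ∈ distTriang D) (f : X ⟶ Y) :
    ρ.rank (biprod.desc f k) = ρ.rank k + ρ.rank (f ≫ c) := by
  obtain ⟨N, q, r, hN⟩ := distinguished_cocone_triangle (f ≫ c)
  obtain ⟨t, hqt, hrt⟩ : ∃ t : N ⟶ K⟦(1 : ℤ)⟧,
      q ≫ t = d ∧ r ≫ f⟦(1 : ℤ)⟧' + t ≫ k⟦(1 : ℤ)⟧' = 0 := by
    obtain ⟨t, hqt, hrt⟩ : ∃ t : N ⟶ K⟦(1 : ℤ)⟧,
        q ≫ t = 𝟙 V ≫ d ∧ r ≫ f⟦(1 : ℤ)⟧' = t ≫ (-k⟦(1 : ℤ)⟧') :=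
      complete_distinguished_triangle_morphism _ _ hN (rot_of_distTriang _ hT) f (𝟙 V)
        (Category.comp_id _)
    exact ⟨t, hqt.trans (Category.id_comp d), by rw [hrt, Preadditive.comp_neg, neg_add_cancel]⟩
  subst hqt
  have hk := isWeakKernel_mor₁_mor₂ hT
  have hq := isWeakKernel_mor₂_mor₃ hN
  have exact_Y : IsWeakKernel (biprod.desc f k) (c ≫ q) :=
    hk.desc_comp (isWeakKernel_mor₁_mor₂ hN)
  have exact_N : IsWeakKernel (c ≫ q) (biprod.lift r t) :=
    (isWeakKernel_mor₂_mor₃ hT).comp_lift hq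
  have exact_shift : IsWeakKernel (biprod.lift r t) (biprod.desc (f⟦(1 : ℤ)⟧') (k⟦(1 : ℤ)⟧')) :=
    .lift_desc (c' := c⟦(1 : ℤ)⟧') hrt hq.w
      (by rw [← CategoryTheory.Functor.map_comp, hk.w, CategoryTheory.Functor.map_zero])
      (by rw [← CategoryTheory.Functor.map_comp]; exact isWeakKernel_mor₃_shift_mor₁ hN)
      (isWeakKernel_mor₃_shift_mor₁ hT)
  have rank_Y := ρ.rank_add_of_isWeakKernel exact_Y
  have rank_N := ρ.rank_add_of_isWeakKernel exact_N
  have rank_shift := ρ.rank_add_of_isWeakKernel exact_shift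
  rw [rank_desc_shift, rank_id_biprod, rank_id_shift, rank_id_shift] at rank_shift
  linarith [ρ.rank_mor₁_add_rank_mor₂ hT, ρ.rank_mor₂_add_rank_mor₃ hT,
    ρ.rank_mor₃_add_rank_mor₁ hT, ρ.rank_mor₁_add_rank_mor₂ hN,
    ρ.rank_mor₂_add_rank_mor₃ hN, ρ.rank_mor₃_add_rank_mor₁ hN]

lemma rank_comp_le_right {X Y Z : D} (f : X ⟶ Y) (g : Y ⟶ Z) : ρ.rank (f ≫ g) ≤ ρ.rank g := by
  obtain ⟨K, k, d, hk⟩ := distinguished_cocone_triangle₁ g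
  obtain ⟨Q, p, e, hp⟩ := distinguished_cocone_triangle (biprod.desc f k)
  linarith [ρ.rank_desc_eq_add hk f, ρ.rank_mor₁_add_rank_mor₂ hk, ρ.rank_mor₁_add_rank_mor₂ hp,
    ρ.nonneg p]

lemma rank_zero (X Y : D) : ρ.rank (0 : X ⟶ Y) = 0 := by
  have h := ρ.rank_add_of_isWeakKernel (a := 𝟙 X) (b := (0 : X ⟶ Y))
    ⟨comp_zero, fun _ u _ => ⟨u, (Category.comp_id u).symm⟩⟩
  exact left_eq_add.1 h.symm

lemma rank_mor₂_add_rank_comp_mor₂ {X Y Z K V : D} {f : X ⟶ Y} {g : Y ⟶ Z} {h : Z ⟶ X⟦(1 : ℤ)⟧}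
    {k : K ⟶ Y} {c : Y ⟶ V} {d : V ⟶ K⟦(1 : ℤ)⟧} (hf : Triangle.mk f g h ∈ distTriang D)
    (hk : Triangle.mk k c d ∈ distTriang D) :
    ρ.rank g + ρ.rank (f ≫ c) = ρ.rank c + ρ.rank (k ≫ g) := by
  linarith [ρ.rank_desc_eq_add hf k, ρ.rank_desc_eq_add hk f, ρ.rank_desc_swap f k,
    ρ.rank_mor₁_add_rank_mor₂ hf, ρ.rank_mor₁_add_rank_mor₂ hk]

lemma rank_comp_le_left {X Y Z : D} (f : X ⟶ Y) (g : Y ⟶ Z) : ρ.rank (f ≫ g) ≤ ρ.rank f := by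
  obtain ⟨K, k, d, hk⟩ := distinguished_cocone_triangle₁ f
  obtain ⟨N, n, e, hn⟩ := distinguished_cocone_triangle₁ (f ≫ g)
  have h := ρ.rank_mor₂_add_rank_comp_mor₂ hn hk
  rw [reassoc_of% (isWeakKernel_mor₁_mor₂ hk).w, zero_comp, ρ.rank_zero, add_zero] at h
  exact (le_add_of_nonneg_right (ρ.nonneg _)).trans_eq h

lemma rank_comp_eq_zero_of_right {X Y Z : D} (f : X ⟶ Y) {g : Y ⟶ Z} (hg : ρ.rank g = 0) :
    ρ.rank (f ≫ g) = 0 :=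
  le_antisymm ((ρ.rank_comp_le_right f g).trans_eq hg) (ρ.nonneg _)

lemma rank_comp_eq_zero_of_left {X Y Z : D} {f : X ⟶ Y} (hf : ρ.rank f = 0) (g : Y ⟶ Z) :
    ρ.rank (f ≫ g) = 0 :=
  le_antisymm ((ρ.rank_comp_le_left f g).trans_eq hf) (ρ.nonneg _)

lemma rank_add_eq_zero {X Y : D} {f g : X ⟶ Y} (hf : ρ.rank f = 0) (hg : ρ.rank g = 0) :
    ρ.rank (f + g) = 0 := by
  have h : biprod.desc f g = biprod.map f g ≫ biprod.desc (𝟙 Y) (𝟙 Y) := by ext <;> simp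
  rw [biprod.add_eq_lift_id_desc, h]
  exact ρ.rank_comp_eq_zero_of_right _
    (ρ.rank_comp_eq_zero_of_left (by rw [ρ.additive, hf, hg, add_zero]) _)

/-- `f` is right full for `ρ` when its image has the rank of its whole target, that is when
`ρ̃ (Coker Hom(-, f)) = 0`. -/
def IsRightFull {X Y : D} (f : X ⟶ Y) : Prop := ρ.rank f = ρ.rank (𝟙 Y)

lemma isRightFull_iff {X Y Z : D} {f : X ⟶ Y} {g : Y ⟶ Z} {h : Z ⟶ X⟦(1 : ℤ)⟧}
    (hT : Triangle.mk f g h ∈ distTriang D) : ρ.IsRightFull f ↔ ρ.rank g = 0 := by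
  rw [IsRightFull, ← ρ.rank_mor₁_add_rank_mor₂ hT, left_eq_add]

variable {ρ} in
lemma IsRightFull.comp {X Y Z : D} {f : X ⟶ Y} {g : Y ⟶ Z} (hf : ρ.IsRightFull f)
    (hg : ρ.IsRightFull g) : ρ.IsRightFull (f ≫ g) := by
  obtain ⟨U, a, _, ha⟩ := distinguished_cocone_triangle f
  obtain ⟨V, b, _, hb⟩ := distinguished_cocone_triangle g
  obtain ⟨W, c, _, hc⟩ := distinguished_cocone_triangle (f ≫ g)
  rw [ρ.isRightFull_iff ha] at hf
  rw [ρ.isRightFull_iff hb] at hg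
  rw [ρ.isRightFull_iff hc]
  obtain ⟨s, hs⟩ : ∃ s, g ≫ c = a ≫ s :=
    Triangle.yoneda_exact₂ _ ha (g ≫ c)
      ((Category.assoc f g c).symm.trans (isWeakKernel_mor₁_mor₂ hc).w)
  have h := ρ.rank_mor₂_add_rank_comp_mor₂ hb hc
  rw [hg, hs, ρ.rank_comp_eq_zero_of_left hf] at h
  linarith [ρ.nonneg c, ρ.nonneg ((f ≫ g) ≫ b)]

variable {ρ} in
lemma IsRightFull.exists_pullback {X Y Y' : D} {f : X ⟶ Y} (hf : ρ.IsRightFull f) (u : Y' ⟶ Y) :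
    ∃ (X' : D) (f' : X' ⟶ Y') (u' : X' ⟶ X), ρ.IsRightFull f' ∧ f' ≫ u = u' ≫ f := by
  obtain ⟨Z, g, _, hg⟩ := distinguished_cocone_triangle f
  obtain ⟨X', f', _, hf'⟩ := distinguished_cocone_triangle₁ (u ≫ g)
  obtain ⟨u', hu'⟩ := (isWeakKernel_mor₁_mor₂ hg).exists_lift (f' ≫ u)
    (by simpa using (isWeakKernel_mor₁_mor₂ hf').w)
  rw [ρ.isRightFull_iff hg] at hf
  exact ⟨X', f', u', (ρ.isRightFull_iff hf').2 (ρ.rank_comp_eq_zero_of_right u hf), hu'⟩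

lemma rank_eq_zero_iff_exists_isRightFull {X Y : D} (f : X ⟶ Y) :
    ρ.rank f = 0 ↔ ∃ (W : D) (e : W ⟶ X), ρ.IsRightFull e ∧ e ≫ f = 0 := by
  constructor
  · intro hf
    obtain ⟨W, e, _, he⟩ := distinguished_cocone_triangle₁ f
    exact ⟨W, e, (ρ.isRightFull_iff he).2 hf, (isWeakKernel_mor₁_mor₂ he).w⟩
  · rintro ⟨W, e, he, hef⟩
    obtain ⟨Z, g, _, hg⟩ := distinguished_cocone_triangle e
    obtain ⟨s, rfl⟩ : ∃ s, f = g ≫ s := Triangle.yoneda_exact₂ _ hg f hef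
    exact ρ.rank_comp_eq_zero_of_left ((ρ.isRightFull_iff hg).1 he) s

/-- The topology whose covering sieves are those containing a right full morphism. Sheafification
for it annihilates exactly the presheaves that are locally zero, and among the finitely presented
ones these are the objects of `Ker ρ̃`. -/
def topology : GrothendieckTopology D where
  sieves Y := {S | ∃ (X : D) (f : X ⟶ Y), ρ.IsRightFull f ∧ S f}
  top_mem' Y := ⟨Y, 𝟙 Y, rfl, trivial⟩
  pullback_stable' := by
    rintro Y Y' S u ⟨X, f, hf, hSf⟩
    obtain ⟨X', f', u', hf', h⟩ := hf.exists_pullback u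
    refine ⟨X', f', hf', ?_⟩
    rw [Sieve.pullback_apply, h]
    exact S.downward_closed hSf u'
  transitive' := by
    rintro Y S ⟨X, f, hf, hSf⟩ R hR
    obtain ⟨W, e, he, hRe⟩ := hR hSf
    exact ⟨W, e ≫ f, he.comp hf, hRe⟩

lemma equalizer_zero_mem_topology_iff {X Y : D} (f : X ⟶ Y) :
    Sieve.equalizer f 0 ∈ ρ.topology X ↔ ρ.rank f = 0 := by
  rw [rank_eq_zero_iff_exists_isRightFull]
  refine exists₂_congr fun W e => and_congr_right fun _ => ?_
  rw [Sieve.equalizer_apply, comp_zero]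

end Rank

end RankFunction

section Sheafification

variable {D : Type u} [Category.{v} D] (J : GrothendieckTopology D)

lemma presheafToSheaf_map_eq_iff {A : Type*} [Category* A] {FA : A → A → Type*} {CA : A → Type*}
    [∀ X Y, FunLike (FA X Y) (CA X) (CA Y)] [ConcreteCategory A FA] [HasSheafify J A]
    [J.WEqualsLocallyBijective A] [J.HasSheafCompose (forget A)]
    {F G : Dᵒᵖ ⥤ A} (φ ψ : F ⟶ G) :
    (presheafToSheaf J A).map φ = (presheafToSheaf J A).map ψ ↔
      ∀ ⦃X : Dᵒᵖ⦄ (x : ToType (F.obj X)),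
        Presheaf.equalizerSieve (φ.app X x) (ψ.app X x) ∈ J X.unop := by
  have key : (presheafToSheaf J A).map φ = (presheafToSheaf J A).map ψ ↔
      φ ≫ toSheafify J G = ψ ≫ toSheafify J G := by
    rw [toSheafify_naturality, toSheafify_naturality]
    exact ⟨fun h => by rw [sheafifyMap, sheafifyMap, h],
      fun h => Sheaf.hom_ext (sheafify_hom_ext J _ _ ((presheafToSheaf J A).obj G).property h)⟩
  rw [key]
  constructor
  · intro h X x
    refine Presheaf.equalizerSieve_mem J (toSheafify J G) _ _ ?_
    simpa only [NatTrans.comp_app, ConcreteCategory.comp_apply] using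
      ConcreteCategory.congr_hom (NatTrans.congr_app h X) x
  · intro h
    have separated := ((presheafToSheaf J A).obj G).isSeparated
    ext X
    refine DFunLike.ext _ _ fun x => ?_
    refine separated X.unop _ (h x) _ _ fun Y u hu => ?_
    rw [Presheaf.equalizerSieve_apply] at hu
    change (sheafify J G).map u.op _ = (sheafify J G).map u.op _
    simp only [NatTrans.comp_app, ConcreteCategory.comp_apply, ← NatTrans.naturality_apply, hu]

lemma presheafToSheaf_map_preadditiveYoneda_map_eq_zero_iff [Preadditive D]
    [HasSheafify J AddCommGrpCat.{v}]
    [J.WEqualsLocallyBijective AddCommGrpCat.{v}] [J.HasSheafCompose (forget AddCommGrpCat.{v})]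
    {X Y : D} (f : X ⟶ Y) :
    (presheafToSheaf J AddCommGrpCat.{v}).map (preadditiveYoneda.map f) = 0 ↔
      Sieve.equalizer f 0 ∈ J X := by
  rw [← Functor.map_zero (presheafToSheaf J AddCommGrpCat.{v}), presheafToSheaf_map_eq_iff]
  constructor
  · intro h
    refine J.superset_covering (fun W e he => ?_) (h (X := .op X) (𝟙 X : X ⟶ X))
    have he : e ≫ 𝟙 X ≫ f = e ≫ (0 : X ⟶ Y) := he
    rwa [Category.id_comp] at he
  · rintro h W (x : W.unop ⟶ X)
    refine J.superset_covering (fun V e he => ?_) (J.pullback_stable x h)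
    have he : (e ≫ x) ≫ f = (e ≫ x) ≫ 0 := he
    change e ≫ x ≫ f = e ≫ 0
    rwa [Category.assoc, comp_zero, ← comp_zero (f := e)] at he

instance hasSheafify_addCommGrpCat [EssentiallySmall.{v} D] :
    HasSheafify J AddCommGrpCat.{v} :=
  hasSheafifyEssentiallySmallSite.{v} J _

instance wEqualsLocallyBijective_addCommGrpCat [EssentiallySmall.{v} D] :
    J.WEqualsLocallyBijective AddCommGrpCat.{v} :=
  .ofEssentiallySmall.{v} J

end Sheafification

lemma shortComplex_exact_iff_evaluation {K A : Type*} [Category* K] [Category* A] [Abelian A]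
    (S : ShortComplex (K ⥤ A)) :
    S.Exact ↔ ∀ X : K, (S.map ((evaluation K A).obj X)).Exact := by
  simp only [ShortComplex.exact_iff_isZero_homology, Functor.isZero_iff]
  exact forall_congr' fun X => (S.mapHomologyIso ((evaluation K A).obj X)).symm.isZero_iff

section Cohomological

variable {D : Type u} [Category.{v} D] [Preadditive D] [HasZeroObject D] [HasShift D ℤ]
  [∀ n : ℤ, (shiftFunctor D n).Additive] [Pretriangulated D]

instance isHomological_preadditiveYoneda :
    (preadditiveYoneda : D ⥤ Dᵒᵖ ⥤ AddCommGrpCat.{v}).IsHomological where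
  exact T hT := (shortComplex_exact_iff_evaluation _).2 fun W =>
    (preadditiveCoyoneda.obj W).map_distinguished_exact T hT

variable [HasBinaryBiproducts D] [EssentiallySmall.{v} D]

/-- The composite of the Yoneda embedding with sheafification for `ρ.topology`, which stands for
the Serre localisation of `mod C` at `Ker ρ̃`. -/
noncomputable def RankFunction.cohomFunctor (ρ : RankFunction D) : CohomFunctorTo D where
  A := Sheaf ρ.topology AddCommGrpCat.{v}
  ab := sheafIsAbelian
  H := preadditiveYoneda ⋙ presheafToSheaf ρ.topology AddCommGrpCat.{v}
  cohomological T hT :=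
    ⟨_, (preadditiveYoneda.map_distinguished_exact T hT).map
      (presheafToSheaf ρ.topology AddCommGrpCat.{v})⟩

lemma RankFunction.cohomFunctor_map_eq_zero_iff (ρ : RankFunction D) {X Y : D} (f : X ⟶ Y) :
    ρ.cohomFunctor.H.map f = 0 ↔ ρ.rank f = 0 :=
  (presheafToSheaf_map_preadditiveYoneda_map_eq_zero_iff ρ.topology f).trans
    (ρ.equalizer_zero_mem_topology_iff f)

end Cohomological

theorem kernel_on_morphisms_is_sigmaClosed_cohomological_ideal (ρ : RankFunction C) :
    -- `Ker ρ` is an additive ideal: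
    (∀ X Y : C, ρ.rank (0 : X ⟶ Y) = 0) ∧
    (∀ ⦃X Y : C⦄ (f g : X ⟶ Y), ρ.rank f = 0 → ρ.rank g = 0 → ρ.rank (f + g) = 0) ∧
    (∀ ⦃X Y : C⦄ (f : X ⟶ Y), ρ.rank f = 0 → ρ.rank (-f) = 0) ∧
    (∀ ⦃W X Y : C⦄ (e : W ⟶ X) (f : X ⟶ Y), ρ.rank f = 0 → ρ.rank (e ≫ f) = 0) ∧
    (∀ ⦃X Y Z : C⦄ (f : X ⟶ Y) (e : Y ⟶ Z), ρ.rank f = 0 → ρ.rank (f ≫ e) = 0) ∧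
    -- `Ker ρ` is Σ-closed:
    (∀ ⦃X Y : C⦄ (f : X ⟶ Y),
      ρ.rank f = 0 ↔ ρ.rank ((shiftFunctor C (1 : ℤ)).map f) = 0) ∧
    -- `Ker ρ` is a cohomological ideal:
    (∃ Φ : CohomFunctorTo C, ∀ ⦃X Y : C⦄ (f : X ⟶ Y),
      ρ.rank f = 0 ↔ Φ.H.map f = 0) := by
  exact ⟨ρ.rank_zero, fun _ _ _ _ => ρ.rank_add_eq_zero, fun _ _ f => (ρ.rank_neg f).trans,
    fun _ _ _ e _ => ρ.rank_comp_eq_zero_of_right e,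
    fun _ _ _ _ e hf => ρ.rank_comp_eq_zero_of_left hf e, fun _ _ f => by rw [ρ.shiftInv],
    ρ.cohomFunctor, fun _ _ f => (ρ.cohomFunctor_map_eq_zero_iff f).symm⟩
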